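/- Suppose q is a primitive n-th root of unity with n ≥ 2. Then the n-th power of the q-difference operator annihilates every polynomial: Dⁿf = 0 for all f ∈ ℂ[z]. -/

import Mathlib

noncomputable section

/-- The scaling operator `σ` on `ℂ[z]`: `(σ f)(z) = f (q z)`. -/
def qscale (q : ℂ) (f : Polynomial ℂ) : Polynomial ℂ :=
  f.comp (Polynomial.C q * Polynomial.X)

/-- The `q`-difference operator on `ℂ[z]`: `(D f)(z) = (f(z) - f(qz)) / ((1-q) z)`.
Since `f - σ f` has zero constant term, the division by `z` is exact and given by `divX`. -/
def qdiff (q : ℂ) (f : Polynomial ℂ) : Polynomial ℂ :=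
  Polynomial.C (1 - q)⁻¹ * (f - qscale q f).divX

theorem qdiff_coeff_aux (q : ℂ) (f : Polynomial ℂ) (k : ℕ) :
    (qdiff q f).coeff k = (1 - q)⁻¹ * ((1 - q ^ (k + 1)) * f.coeff (k + 1)) := by
  simp only [qdiff, qscale, Polynomial.coeff_C_mul, Polynomial.coeff_divX, Polynomial.coeff_sub,
    Polynomial.comp_C_mul_X_coeff]
  ring

theorem qdiff_iter_coeff_aux (q : ℂ) (m : ℕ) : ∀ (f : Polynomial ℂ) (k : ℕ),
    ((qdiff q)^[m] f).coeff k =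
      (1 - q)⁻¹ ^ m * ((∏ i ∈ Finset.range m, (1 - q ^ (k + i + 1))) * f.coeff (k + m)) := by
  induction m with
  | zero => intro f k; simp
  | succ m ih =>
    intro f k
    rw [Function.iterate_succ_apply, ih, qdiff_coeff_aux, Finset.prod_range_succ, pow_succ,
      ← add_assoc]
    ring

/-- If `q` is a primitive `n`-th root of unity with `n ≥ 2`, then the `n`-th power of the
`q`-difference operator annihilates every polynomial: `Dⁿ f = 0` for all `f ∈ ℂ[z]`. -/
theorem qdiff_pow_primitive_root_eq_zero
    (n : ℕ) (hn : 2 ≤ n) (q : ℂ) (hq1 : q ^ n = 1)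
    (hq2 : ∀ d : ℕ, 0 < d → d < n → q ^ d ≠ 1)
    (f : Polynomial ℂ) :
    (qdiff q)^[n] f = 0 := by
  ext k
  have hlt : k % n < n := Nat.mod_lt _ (by omega)
  have hz : ∏ i ∈ Finset.range n, (1 - q ^ (k + i + 1)) = 0 := by
    apply Finset.prod_eq_zero (i := n - 1 - k % n) (Finset.mem_range.mpr (by omega))
    have hk : k + (n - 1 - k % n) + 1 = n * (k / n + 1) := by
      have := Nat.div_add_mod k n
      rw [mul_add]
      omega
    rw [hk, pow_mul, hq1, one_pow, sub_self]
  rw [qdiff_iter_coeff_aux, hz]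
  simp
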